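/- Let (N,⪯,F) be a transitive-closed description of a simply dependent multimodal logic. Then the sequent calculus G_(N,⪯,F)ConW is sound with respect to L_(N,⪯,F): for every formula A, if the sequent ⇒ A is derivable in G_(N,⪯,F)ConW then A ∈ L_(N,⪯,F). -/

import Mathlib

/-- Multimodal formulas with modalities indexed by `I`. -/
inductive Fm (I : Type) : Type
  | var : ℕ → Fm I
  | bot : Fm I
  | top : Fm I
  | neg : Fm I → Fm I
  | and : Fm I → Fm I → Fm I
  | or : Fm I → Fm I → Fm I
  | imp : Fm I → Fm I → Fm I
  | box : I → Fm I → Fm I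

namespace Fm

/-- Evaluation of the propositional structure of a formula under an assignment
`v` of truth values to formulas (only used on atoms, i.e. propositional
variables and boxed formulas). -/
def evalP {I : Type} (v : Fm I → Prop) : Fm I → Prop
  | var n => v (var n)
  | bot => False
  | top => True
  | neg A => ¬ evalP v A
  | and A B => evalP v A ∧ evalP v B
  | or A B => evalP v A ∨ evalP v B
  | imp A B => evalP v A → evalP v B
  | box i A => v (box i A)

/-- `A` is an instance of a classical propositional tautology. -/
def Taut {I : Type} (A : Fm I) : Prop := ∀ v, evalP v A

end Fm

/-- An element of the set `𝔏` of extensions of modal logic `K` with axioms from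
`{D, T, 4}`, given by the choice of added axioms. -/
structure KExt where
  d : Bool
  t : Bool
  four : Bool

/-- Hilbert-style theoremhood in the (monomodal) extension of `K` described by
`L : KExt`: classical tautologies, modus ponens, the `K` axiom, necessitation,
and the chosen axioms among `D`, `T`, `4`. -/
inductive KThm (L : KExt) : Fm Unit → Prop
  | taut {A} : Fm.Taut A → KThm L A
  | mp {A B} : KThm L (.imp A B) → KThm L A → KThm L B
  | axK {A B} : KThm L (.imp (.box () (.imp A B)) (.imp (.box () A) (.box () B)))
  | nec {A} : KThm L A → KThm L (.box () A)
  | axD : L.d = true → KThm L (.neg (.box () .bot))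
  | axT {A} : L.t = true → KThm L (.imp (.box () A) A)
  | ax4 {A} : L.four = true → KThm L (.imp (.box () A) (.box () (.box () A)))

/-- Containment of logics: every theorem of `L` is a theorem of `L'`. -/
def KExt.le (L L' : KExt) : Prop := ∀ A, KThm L A → KThm L' A

/-- The logic `KD`. -/
def KD : KExt := ⟨true, false, false⟩
/-- The logic `KT`. -/
def KT : KExt := ⟨false, true, false⟩
/-- The logic `K4`. -/
def K4 : KExt := ⟨false, false, true⟩

/-- A description `(N, ⪯, F)` of a simply dependent multimodal logic: a finite
set `N` of natural numbers, a partial order `⪯` on `N`, and a map `F` assigning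
to each index an extension of `K` with axioms from `{D, T, 4}`. -/
structure Descr where
  N : Finset ℕ
  le : ℕ → ℕ → Prop
  le_refl : ∀ i ∈ N, le i i
  le_trans : ∀ i ∈ N, ∀ j ∈ N, ∀ k ∈ N, le i j → le j k → le i k
  le_antisymm : ∀ i ∈ N, ∀ j ∈ N, le i j → le j i → i = j
  F : ℕ → KExt

/-- Hilbert-style theoremhood in the simply dependent multimodal logic
`L_(N,⪯,F)`: classical tautologies, modus ponens, and for each `i ∈ N` the `K`
axiom and necessitation rule for `□ᵢ`, the axioms of `F i` instantiated with
`□ᵢ`, together with the interaction axioms `□ⱼA → □ᵢA` for `i ⪯ j`. -/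
inductive MThm (D : Descr) : Fm ℕ → Prop
  | taut {A} : Fm.Taut A → MThm D A
  | mp {A B} : MThm D (.imp A B) → MThm D A → MThm D B
  | axK {i A B} : i ∈ D.N → MThm D (.imp (.box i (.imp A B)) (.imp (.box i A) (.box i B)))
  | nec {i A} : i ∈ D.N → MThm D A → MThm D (.box i A)
  | axD {i} : i ∈ D.N → (D.F i).d = true → MThm D (.neg (.box i .bot))
  | axT {i A} : i ∈ D.N → (D.F i).t = true → MThm D (.imp (.box i A) A)
  | ax4 {i A} : i ∈ D.N → (D.F i).four = true → MThm D (.imp (.box i A) (.box i (.box i A)))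
  | inter {i j A} : i ∈ D.N → j ∈ D.N → D.le i j → MThm D (.imp (.box j A) (.box i A))

open Classical in
/-- The upset `↑i = {j ∈ N : i ⪯ j}` of an index. -/
noncomputable def Descr.up (D : Descr) (i : ℕ) : Finset ℕ :=
  D.N.filter fun j => D.le i j

/-- A description is transitive-closed if for all `i ⪯ j` in `N`,
`K4 ⊆ F i` implies `K4 ⊆ F j`. -/
def TransClosed (D : Descr) : Prop :=
  ∀ i ∈ D.N, ∀ j ∈ D.N, D.le i j → K4.le (D.F i) → K4.le (D.F j)

/-- The sequent calculus `G_(N,⪯,F)ConW`: the standard two-sided multiset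
sequent calculus for classical propositional logic with atomic initial
sequents, explicit weakening and contraction, and the modal rules `kᵢ`, `dᵢ`,
`tᵢ`.  In the modal rules the families `Gm j` (which must be empty for indices
`j` whose logic does not contain `K4`) and `Sg j` are the context multisets
`Γⱼ` and `Σⱼ` from the rules. -/
inductive GD (D : Descr) : Multiset (Fm ℕ) → Multiset (Fm ℕ) → Prop
  | init {Γ Δ : Multiset (Fm ℕ)} {m : ℕ} : GD D (Fm.var m ::ₘ Γ) (Fm.var m ::ₘ Δ)
  | botL {Γ Δ} : GD D (Fm.bot ::ₘ Γ) Δ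
  | topR {Γ Δ} : GD D Γ (Fm.top ::ₘ Δ)
  | negL {Γ Δ A} : GD D Γ (A ::ₘ Δ) → GD D (Fm.neg A ::ₘ Γ) Δ
  | negR {Γ Δ A} : GD D (A ::ₘ Γ) Δ → GD D Γ (Fm.neg A ::ₘ Δ)
  | andL {Γ Δ A B} : GD D (A ::ₘ B ::ₘ Γ) Δ → GD D (Fm.and A B ::ₘ Γ) Δ
  | andR {Γ Δ A B} : GD D Γ (A ::ₘ Δ) → GD D Γ (B ::ₘ Δ) → GD D Γ (Fm.and A B ::ₘ Δ)
  | orL {Γ Δ A B} : GD D (A ::ₘ Γ) Δ → GD D (B ::ₘ Γ) Δ → GD D (Fm.or A B ::ₘ Γ) Δ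
  | orR {Γ Δ A B} : GD D Γ (A ::ₘ B ::ₘ Δ) → GD D Γ (Fm.or A B ::ₘ Δ)
  | impL {Γ Δ A B} : GD D (B ::ₘ Γ) Δ → GD D Γ (A ::ₘ Δ) → GD D (Fm.imp A B ::ₘ Γ) Δ
  | impR {Γ Δ A B} : GD D (A ::ₘ Γ) (B ::ₘ Δ) → GD D Γ (Fm.imp A B ::ₘ Δ)
  | wkL {Γ Δ A} : GD D Γ Δ → GD D (A ::ₘ Γ) Δ
  | wkR {Γ Δ A} : GD D Γ Δ → GD D Γ (A ::ₘ Δ)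
  | conL {Γ Δ A} : GD D (A ::ₘ A ::ₘ Γ) Δ → GD D (A ::ₘ Γ) Δ
  | conR {Γ Δ A} : GD D Γ (A ::ₘ A ::ₘ Δ) → GD D Γ (A ::ₘ Δ)
  | ruleK {i : ℕ} {Gm Sg : ℕ → Multiset (Fm ℕ)} {Om Xi : Multiset (Fm ℕ)} {A : Fm ℕ} :
      i ∈ D.N → (∀ j, ¬ K4.le (D.F j) → Gm j = 0) →
      GD D (∑ j ∈ D.up i, ((Gm j).map (Fm.box j) + Sg j)) {A} →
      GD D (Om + ∑ j ∈ D.up i, ((Gm j).map (Fm.box j) + (Sg j).map (Fm.box j)))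
        (Fm.box i A ::ₘ Xi)
  | ruleD {i : ℕ} {Gm Sg : ℕ → Multiset (Fm ℕ)} {Om Xi : Multiset (Fm ℕ)} :
      i ∈ D.N → KD.le (D.F i) → (∀ j, ¬ K4.le (D.F j) → Gm j = 0) →
      GD D (∑ j ∈ D.up i, ((Gm j).map (Fm.box j) + Sg j)) 0 →
      GD D (Om + ∑ j ∈ D.up i, ((Gm j).map (Fm.box j) + (Sg j).map (Fm.box j))) Xi
  | ruleT {i : ℕ} {Sg : ℕ → Multiset (Fm ℕ)} {Om Xi : Multiset (Fm ℕ)} :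
      i ∈ D.N → KT.le (D.F i) →
      GD D (Om + ∑ j ∈ D.up i, Sg j) Xi →
      GD D (Om + ∑ j ∈ D.up i, (Sg j).map (Fm.box j)) Xi

def ksat {W : Type} (R : W → W → Prop) (V : W → Prop) : W → Fm Unit → Prop
  | w, .var _ => V w
  | _, .bot => False
  | _, .top => True
  | w, .neg A => ¬ ksat R V w A
  | w, .and A B => ksat R V w A ∧ ksat R V w B
  | w, .or A B => ksat R V w A ∨ ksat R V w B
  | w, .imp A B => ksat R V w A → ksat R V w B
  | w, .box _ A => ∀ u, R w u → ksat R V u A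

theorem ksat_evalP {W : Type} (R : W → W → Prop) (V : W → Prop) (w : W) (A : Fm Unit) :
    Fm.evalP (ksat R V w) A ↔ ksat R V w A := by
  induction A <;> simp_all [Fm.evalP, ksat]

theorem ksat_sound {W : Type} (R : W → W → Prop) (V : W → Prop) (L : KExt)
    (hd : L.d = true → ∀ w, ∃ u, R w u) (ht : L.t = true → ∀ w, R w w)
    (h4 : L.four = true → ∀ a b c, R a b → R b c → R a c) (A : Fm Unit) (h : KThm L A) :
    ∀ w, ksat R V w A := by
  induction h with
  | taut h => intro w; exact (ksat_evalP R V w _).1 (h _)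
  | mp _ _ h1 h2 => intro w; exact h1 w (h2 w)
  | axK => intro w h1 h2 u hu; exact h1 u hu (h2 u hu)
  | nec _ ih => intro w u _; exact ih u
  | axD h => intro w hb; obtain ⟨u, hu⟩ := hd h w; exact hb u hu
  | axT h => intro w hb; exact hb w (ht h w)
  | ax4 h => intro w hb u hu x hx; exact hb x (h4 h _ _ _ hu hx)

theorem four_of_le {L : KExt} (h : K4.le L) : L.four = true := by
  by_contra hn
  have := ksat_sound (W := Fin 3) (fun a b => a = b ∨ b.val = a.val + 1) (fun w => w ≠ 2) L
    (fun _ w => ⟨w, Or.inl rfl⟩) (fun _ w => Or.inl rfl) (fun h => absurd h hn) _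
    (h _ (KThm.ax4 (A := .var 0) rfl)) 0
  simp only [ksat] at this
  refine this ?_ 1 (Or.inr rfl) 2 (Or.inr rfl) rfl
  decide

theorem t_of_le {L : KExt} (h : KT.le L) : L.t = true := by
  by_contra hn
  have := ksat_sound (W := Bool) (fun _ b => b = true) (fun w => w = true) L
    (fun _ w => ⟨true, rfl⟩) (fun h => absurd h hn) (fun _ _ _ _ _ h => h) _
    (h _ (KThm.axT (A := .var 0) rfl)) false
  simp [ksat] at this

theorem dt_of_le {L : KExt} (h : KD.le L) : L.d = true ∨ L.t = true := by
  by_contra hn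
  rw [not_or] at hn
  have := ksat_sound (W := Unit) (fun _ _ => False) (fun _ => True) L
    (fun h => absurd h hn.1) (fun h => absurd h hn.2) (fun _ _ _ _ h _ => h) _
    (h _ (KThm.axD rfl)) ()
  simp [ksat] at this

def Ent (D : Descr) (P : Multiset (Fm ℕ)) (A : Fm ℕ) : Prop :=
  ∃ C, MThm D C ∧ ∀ v, Fm.evalP v C → (∀ X ∈ P, Fm.evalP v X) → Fm.evalP v A

def SEnt (D : Descr) (P Q : Multiset (Fm ℕ)) : Prop :=
  ∃ C, MThm D C ∧ ∀ v, Fm.evalP v C → (∀ X ∈ P, Fm.evalP v X) → ∃ B ∈ Q, Fm.evalP v B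

theorem MThm.conj {D : Descr} {A B : Fm ℕ} (h1 : MThm D A) (h2 : MThm D B) :
    MThm D (.and A B) :=
  .mp (.mp (.taut (A := .imp A (.imp B (.and A B))) fun _ a b => ⟨a, b⟩) h1) h2

theorem Ent.thm {D : Descr} {P} {A : Fm ℕ} (h : MThm D A) : Ent D P A :=
  ⟨A, h, fun _ h _ => h⟩

theorem Ent.mem {D : Descr} {P} {A : Fm ℕ} (h : A ∈ P) : Ent D P A :=
  ⟨.top, .taut fun _ => trivial, fun _ _ hp => hp A h⟩

theorem Ent.mp {D : Descr} {P} {A B : Fm ℕ} (h1 : Ent D P (.imp A B)) (h2 : Ent D P A) :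
    Ent D P B := by
  obtain ⟨C, hC, h⟩ := h1
  obtain ⟨C', hC', h'⟩ := h2
  exact ⟨_, hC.conj hC', fun v hv hp => h v hv.1 hp (h' v hv.2 hp)⟩

theorem Ent.all {D : Descr} {P Q : Multiset (Fm ℕ)} (h : ∀ A ∈ Q, Ent D P A) :
    ∃ C, MThm D C ∧ ∀ v, Fm.evalP v C → (∀ X ∈ P, Fm.evalP v X) → ∀ A ∈ Q, Fm.evalP v A := by
  induction Q using Multiset.induction_on with
  | empty => exact ⟨.top, .taut fun _ => trivial, by simp⟩
  | cons A Q ih =>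
    obtain ⟨C, hC, h1⟩ := ih fun B hB => h B (Multiset.mem_cons_of_mem hB)
    obtain ⟨C', hC', h2⟩ := h A (Multiset.mem_cons_self A Q)
    refine ⟨_, hC.conj hC', fun v hv hp B hB => ?_⟩
    rcases Multiset.mem_cons.1 hB with rfl | hB
    · exact h2 v hv.2 hp
    · exact h1 v hv.1 hp B hB

def imps (l : List (Fm ℕ)) (A : Fm ℕ) : Fm ℕ := l.foldr Fm.imp A

theorem evalP_imps (v) (l : List (Fm ℕ)) (A : Fm ℕ) :
    Fm.evalP v (imps l A) ↔ ((∀ B ∈ l, Fm.evalP v B) → Fm.evalP v A) := by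
  induction l with
  | nil => simp [imps]
  | cons B l ih =>
    have : Fm.evalP v (imps (B :: l) A) ↔ (Fm.evalP v B → Fm.evalP v (imps l A)) := Iff.rfl
    rw [this, ih]
    simp

theorem Ent.toThm {D : Descr} {P} {A : Fm ℕ} (h : Ent D P A) : MThm D (imps P.toList A) := by
  obtain ⟨C, hC, h⟩ := h
  refine .mp (.taut (A := .imp C _) fun v hv => (evalP_imps v _ _).2 fun hp => ?_) hC
  exact h v hv fun X hX => hp X (Multiset.mem_toList.2 hX)

theorem Ent.boxL {D : Descr} {P} {i : ℕ} (hi : i ∈ D.N) {A : Fm ℕ} (l : List (Fm ℕ))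
    (h : Ent D P (.box i (imps l A))) (hl : ∀ B ∈ l, Ent D P (.box i B)) :
    Ent D P (.box i A) := by
  induction l with
  | nil => exact h
  | cons B l ih =>
    exact ih (((Ent.thm (.axK hi)).mp h).mp (hl B (by simp))) fun X hX => hl X (by simp [hX])

theorem Ent.box {D : Descr} {P Q} {i : ℕ} (hi : i ∈ D.N) {A : Fm ℕ}
    (h : Ent D Q A) (hl : ∀ B ∈ Q, Ent D P (.box i B)) : Ent D P (.box i A) :=
  Ent.boxL hi Q.toList (Ent.thm (.nec hi h.toThm)) fun B hB => hl B (Multiset.mem_toList.1 hB)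

theorem mem_up {D : Descr} {i j : ℕ} : j ∈ D.up i ↔ j ∈ D.N ∧ D.le i j := by
  simp [Descr.up]

theorem modal_prem {D : Descr} {i : ℕ} (hi : i ∈ D.N) {Gm Sg : ℕ → Multiset (Fm ℕ)}
    {Om : Multiset (Fm ℕ)} (hG : ∀ j, ¬ K4.le (D.F j) → Gm j = 0) (B : Fm ℕ)
    (hB : B ∈ ∑ j ∈ D.up i, ((Gm j).map (Fm.box j) + Sg j)) :
    Ent D (Om + ∑ j ∈ D.up i, ((Gm j).map (Fm.box j) + (Sg j).map (Fm.box j))) (.box i B) := by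
  obtain ⟨j, hj, hB⟩ := Multiset.mem_sum.1 hB
  have key : ∀ X, X ∈ (Gm j).map (Fm.box j) + (Sg j).map (Fm.box j) →
      X ∈ Om + ∑ j ∈ D.up i, ((Gm j).map (Fm.box j) + (Sg j).map (Fm.box j)) :=
    fun X hX => Multiset.mem_add.2 (Or.inr (Multiset.mem_sum.2 ⟨j, hj, hX⟩))
  obtain ⟨hjN, hij⟩ := mem_up.1 hj
  rcases Multiset.mem_add.1 hB with hB | hB
  · have h4 : K4.le (D.F j) := by
      by_contra hn
      simp [hG j hn] at hB
    have hm := key B (Multiset.mem_add.2 (Or.inl hB))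
    obtain ⟨X, _, rfl⟩ := Multiset.mem_map.1 hB
    exact (Ent.thm (.inter hi hjN hij)).mp
      ((Ent.thm (.ax4 hjN (four_of_le h4))).mp (Ent.mem hm))
  · exact (Ent.thm (.inter hi hjN hij)).mp
      (Ent.mem (key _ (Multiset.mem_add.2 (Or.inr (Multiset.mem_map_of_mem _ hB)))))

theorem GD_SEnt (D : Descr) {P Q : Multiset (Fm ℕ)} (h : GD D P Q) : SEnt D P Q := by
  induction h with
  | init => exact ⟨.top, .taut fun _ => trivial, fun v _ h => ⟨_, Multiset.mem_cons_self _ _,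
      h _ (Multiset.mem_cons_self _ _)⟩⟩
  | botL => exact ⟨.top, .taut fun _ => trivial, fun v _ h =>
      (h _ (Multiset.mem_cons_self _ _)).elim⟩
  | topR => exact ⟨.top, .taut fun _ => trivial, fun v _ h => ⟨_, Multiset.mem_cons_self _ _,
      trivial⟩⟩
  | negL _ ih | negR _ ih | andL _ ih | orR _ ih | impR _ ih | wkL _ ih | wkR _ ih | conL _ ih
  | conR _ ih =>
    obtain ⟨C, hC, h⟩ := ih
    refine ⟨C, hC, fun v hv => ?_⟩
    have := h v hv
    simp only [Multiset.mem_cons, forall_eq_or_imp, exists_eq_or_imp, Fm.evalP] at this ⊢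
    tauto
  | andR _ _ ih1 ih2 | orL _ _ ih1 ih2 | impL _ _ ih1 ih2 =>
    obtain ⟨C, hC, h⟩ := ih1
    obtain ⟨C', hC', h'⟩ := ih2
    refine ⟨_, hC.conj hC', fun v hv => ?_⟩
    have h1 := h v hv.1
    have h2 := h' v hv.2
    simp only [Multiset.mem_cons, forall_eq_or_imp, exists_eq_or_imp, Fm.evalP] at h1 h2 ⊢
    tauto
  | @ruleK i Gm Sg Om Xi A hi hG _ ih =>
    obtain ⟨C, hC, h⟩ := ih
    have hE : Ent D (∑ j ∈ D.up i, ((Gm j).map (Fm.box j) + Sg j)) A :=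
      ⟨C, hC, fun v hv hp => by simpa using h v hv hp⟩
    obtain ⟨C', hC', h'⟩ := Ent.box hi hE (modal_prem (Om := Om) hi hG)
    exact ⟨C', hC', fun v hv hp => ⟨_, Multiset.mem_cons_self _ _, h' v hv hp⟩⟩
  | @ruleD i Gm Sg Om Xi hi hd hG _ ih =>
    obtain ⟨C, hC, h⟩ := ih
    have hE : Ent D (∑ j ∈ D.up i, ((Gm j).map (Fm.box j) + Sg j)) .bot :=
      ⟨C, hC, fun v hv hp => by simpa using h v hv hp⟩
    have h1 := Ent.box hi hE (modal_prem (Om := Om) hi hG)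
    have h2 : MThm D (.imp (.box i .bot) .bot) := by
      rcases dt_of_le hd with h | h
      · exact .mp (.taut (A := .imp (.neg (.box i .bot)) (.imp (.box i .bot) .bot))
          fun _ h => h) (.axD hi h)
      · exact .axT hi h
    obtain ⟨C', hC', h'⟩ := (Ent.thm h2).mp h1
    exact ⟨C', hC', fun v hv hp => (h' v hv hp).elim⟩
  | @ruleT i Sg Om Xi hi ht _ ih =>
    obtain ⟨C, hC, h⟩ := ih
    have : ∀ B ∈ Om + ∑ j ∈ D.up i, Sg j,
        Ent D (Om + ∑ j ∈ D.up i, (Sg j).map (Fm.box j)) B := by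
      intro B hB
      rcases Multiset.mem_add.1 hB with hB | hB
      · exact Ent.mem (Multiset.mem_add.2 (Or.inl hB))
      · obtain ⟨j, hj, hB⟩ := Multiset.mem_sum.1 hB
        obtain ⟨hjN, hij⟩ := mem_up.1 hj
        exact (Ent.thm (.axT hi (t_of_le ht))).mp ((Ent.thm (.inter hi hjN hij)).mp
          (Ent.mem (Multiset.mem_add.2 (Or.inr (Multiset.mem_sum.2
            ⟨j, hj, Multiset.mem_map_of_mem _ hB⟩)))))
    obtain ⟨C', hC', h'⟩ := Ent.all this
    exact ⟨_, hC.conj hC', fun v hv hp => h v hv.1 (h' v hv.2 hp)⟩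

/-- Soundness of the sequent calculus `G_(N,⪯,F)ConW` for a transitive-closed
description: if `⇒ A` is derivable, then `A` is a theorem of `L_(N,⪯,F)`. -/
theorem GD_sound (D : Descr) (htc : TransClosed D) (A : Fm ℕ) :
    GD D 0 {A} → MThm D A := by
  intro h
  obtain ⟨C, hC, h⟩ := GD_SEnt D h
  exact .mp (.taut (A := .imp C A) fun v hv => by simpa using h v hv (by simp)) hC
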